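/- arXiv:2403.19466 — 3 statements merged into one kernel-verified Lean document; each statement's English description precedes it below -/
import Mathlib

section
/- Let Φ ∈ C([0,∞)) ∩ C¹_loc((0,∞)) be strictly increasing with Φ(0) = 0 and Φ' > 0 on (0,∞). Let σ ∈ C([0,∞)) ∩ C¹_loc((0,∞)) satisfy σ(0) = 0 together with the growth bounds: σ²(ξ) ≤ c(1 + ξ + Φ(ξ)) for all ξ ∈ [0,∞) for some c ∈ (0,∞), and for every δ ∈ (0,1) there is c_δ ∈ (0,∞) with (σ'(ξ))⁴ / Φ'(ξ) ≤ c_δ (1 + ξ + Φ(ξ)) for all ξ ∈ (δ,∞). Then there exists a sequence (σ_n)_{n∈ℕ} of functions σ_n ∈ C([0,∞)) ∩ C^∞((0,∞)) with σ_n(0) = 0, whose derivatives σ_n' extend to smooth, compactly supported functions on [0,∞), such that: σ_n → σ and σ_n' → σ' uniformly on every compact subset of (0,∞); and the growth bounds hold uniformly in n, i.e. there are constants c' ∈ (0,∞) and, for every δ ∈ (0,1), c'_δ ∈ (0,∞), independent of n, with σ_n²(ξ) ≤ c'(1 + ξ + Φ(ξ)) for all ξ ∈ [0,∞) and (σ_n'(ξ))⁴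 / Φ'(ξ) ≤ c'_δ (1 + ξ + Φ(ξ)) for all ξ ∈ (δ,∞). -/
open MeasureTheory Filter Topology

lemma key (Φ' σ σ' : ℝ → ℝ)
    (hΦ'cont : ContinuousOn Φ' (Set.Ioi 0))
    (hΦ'pos : ∀ ξ > (0:ℝ), 0 < Φ' ξ)
    (hσdiff : ∀ ξ > (0:ℝ), HasDerivAt σ (σ' ξ) ξ)
    (hσ'cont : ContinuousOn σ' (Set.Ioi 0)) (N a : ℝ) (hN : 2 ≤ N) (ha : a = 1 / N) :
    ∃ ψ : ℝ → ℝ, ContDiff ℝ (⊤ : ℕ∞) ψ ∧ HasCompactSupport ψ ∧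
      (∀ ξ ∈ Set.Icc a N, |ψ ξ - σ' ξ| ≤ a) ∧
      (∀ ξ > 0, ψ ξ ^ 4 / Φ' ξ ≤ 8 * (σ' ξ ^ 4 / Φ' ξ) + 8) ∧
      (∀ ξ ∈ Set.Icc 0 a, |∫ x in (0:ℝ)..ξ, ψ x| ≤ a) ∧
      (∀ ξ ∈ Set.Icc a N, |(∫ x in a..ξ, ψ x) - (σ ξ - σ a)| ≤ a) ∧
      (∀ ξ ≥ N, |∫ x in N..ξ, ψ x| ≤ a) := by
  have hN0 : 0 < N := by linarith
  have ha0 : 0 < a := by rw [ha]; positivity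
  have ha1 : a ≤ 1/2 := by rw [ha]; exact one_div_le_one_div_of_le (by norm_num) hN
  have haN : a * N = 1 := by rw [ha]; field_simp
  have hJ : Set.Icc (a/2) (N+1) ⊆ Set.Ioi 0 := fun x hx => by
    have := hx.1; simp only [Set.mem_Ioi]; linarith
  have hcJ : IsCompact (Set.Icc (a/2) (N+1)) := isCompact_Icc
  obtain ⟨M, hM⟩ := hcJ.exists_bound_of_continuousOn (hσ'cont.mono hJ)
  obtain ⟨x0, hx0, hmin⟩ := hcJ.exists_isMinOn ⟨a, by constructor <;> linarith⟩ (hΦ'cont.mono hJ)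
  have hm0 : 0 < Φ' x0 := hΦ'pos _ (hJ hx0)
  have hM0 : 0 ≤ M := (norm_nonneg _).trans (hM a (by constructor <;> linarith))
  set m := Φ' x0 with hm
  obtain ⟨η, hη0, hη1, hηm, hηN⟩ : ∃ η : ℝ, 0 < η ∧ η ≤ a ∧ η ^ 4 ≤ m ∧ η * N ≤ a := by
    refine ⟨min (a*a) m, by positivity, ?_, ?_, ?_⟩
    · exact (min_le_left _ _).trans (by nlinarith)
    · have h1 : min (a*a) m ≤ 1 := (min_le_left _ _).trans (by nlinarith)
      have h0 : 0 ≤ min (a*a) m := by positivity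
      calc (min (a*a) m)^4 ≤ (min (a*a) m)^1 := pow_le_pow_of_le_one h0 h1 (by norm_num)
        _ ≤ m := by simp
    · calc _ ≤ (a*a) * N := by gcongr; exact min_le_left _ _
        _ = a := by rw [mul_assoc, haN, mul_one]
  obtain ⟨ε, hε0, hε1, hεM⟩ : ∃ ε : ℝ, 0 < ε ∧ ε ≤ a/2 ∧ (M+1) * ε ≤ a := by
    refine ⟨min (a/2) (a/(M+1)), by positivity, min_le_left _ _, ?_⟩
    calc _ ≤ (M+1) * (a/(M+1)) := by gcongr; exact min_le_right _ _
      _ = a := by field_simp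
  obtain ⟨p, hp⟩ := exists_polynomial_near_of_continuousOn (a/2) (N+1) σ' (hσ'cont.mono hJ) η hη0
  let χ : ContDiffBump ((a+N)/2) := ⟨(N-a)/2, (N-a)/2+ε, by linarith, by linarith⟩
  have χ1 : ∀ x ∈ Set.Icc a N, χ x = 1 := fun x hx => by
    apply χ.one_of_mem_closedBall
    rw [Metric.mem_closedBall, Real.dist_eq, abs_le]
    change -((N-a)/2) ≤ _ ∧ _ ≤ (N-a)/2
    constructor <;> linarith [hx.1, hx.2]
  have χ0 : ∀ x, x ≤ a - ε ∨ N + ε ≤ x → χ x = 0 := fun x hx => by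
    apply χ.zero_of_le_dist
    rw [Real.dist_eq, le_abs]
    change (N-a)/2 + ε ≤ _ ∨ (N-a)/2 + ε ≤ _
    rcases hx with hx | hx
    · right; linarith
    · left; linarith
  let ψ : ℝ → ℝ := fun x => p.eval x * χ x
  have hψs : ContDiff ℝ (⊤ : ℕ∞) ψ := by
    have h1 : ContDiff ℝ (⊤ : ℕ∞) (fun x => p.eval x) := by simpa using p.contDiff_aeval (𝕜 := ℝ) (⊤ : ℕ∞)
    exact h1.mul χ.contDiff
  have hψc : Continuous ψ := hψs.continuous
  have hψ0 : ∀ x, x ≤ a - ε ∨ N + ε ≤ x → ψ x = 0 := fun x hx => by simp [ψ, χ0 x hx]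
  have hψle : ∀ x ∈ Set.Icc (a/2) (N+1), |ψ x| ≤ |σ' x| + η := fun x hx => by
    have h1 := (hp x hx).le
    have h2 : |p.eval x| ≤ |σ' x| + η := by
      have := abs_add_le (p.eval x - σ' x) (σ' x)
      rw [sub_add_cancel] at this; linarith
    have : |ψ x| ≤ |p.eval x| := by
      simp only [ψ, abs_mul, abs_of_nonneg (χ.nonneg (x := x))]
      exact mul_le_of_le_one_right (abs_nonneg _) χ.le_one
    linarith
  have hψM : ∀ x ∈ Set.Icc (a/2) (N+1), ‖ψ x‖ ≤ M + 1 := fun x hx => by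
    have := hψle x hx
    have h2 := hM x hx
    rw [Real.norm_eq_abs] at *
    linarith
  have hi : ∀ u v : ℝ, IntervalIntegrable ψ volume u v := fun u v => hψc.intervalIntegrable u v
  have hψ1 : ∀ ξ ∈ Set.Icc a N, |ψ ξ - σ' ξ| ≤ η := fun ξ hξ => by
    have := (hp ξ ⟨by linarith [hξ.1], by linarith [hξ.2]⟩).le
    simpa [ψ, χ1 ξ hξ] using this
  have short : ∀ u v : ℝ, a/2 ≤ u → u ≤ v → v ≤ N+1 → v - u ≤ ε → |∫ x in u..v, ψ x| ≤ a := by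
    intro u v hu huv hv huε
    have := intervalIntegral.norm_integral_le_of_norm_le_const (a := u) (b := v) (C := M+1) (f := ψ)
      (fun x hx => by
        rw [Set.uIoc_of_le huv] at hx
        exact hψM x ⟨by linarith [hx.1], by linarith [hx.2]⟩)
    rw [Real.norm_eq_abs, abs_of_nonneg (by linarith : 0 ≤ v - u)] at this
    nlinarith
  have zero : ∀ u v : ℝ, u ≤ v → (v ≤ a - ε ∨ N + ε ≤ u) → ∫ x in u..v, ψ x = 0 := by
    intro u v huv h
    rw [intervalIntegral.integral_congr (g := fun _ => (0:ℝ)), intervalIntegral.integral_zero]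
    intro x hx
    rw [Set.uIcc_of_le huv] at hx
    apply hψ0
    rcases h with h | h
    · left; linarith [hx.2]
    · right; linarith [hx.1]
  refine ⟨ψ, hψs, χ.hasCompactSupport.mul_left, fun ξ hξ => (hψ1 ξ hξ).trans hη1, ?_, ?_, ?_, ?_⟩
  · intro ξ hξ
    have hP := hΦ'pos ξ hξ
    by_cases hx : ξ ∈ Set.Icc (a/2) (N+1)
    · have h1 := hψle ξ hx
      have h2 : m ≤ Φ' ξ := hmin hx
      have h3 : ψ ξ ^ 4 ≤ 8 * σ' ξ ^ 4 + 8 * Φ' ξ := by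
        have e1 : ψ ξ ^ 4 = |ψ ξ| ^ 4 := by rw [Even.pow_abs (by decide)]
        have e2 : σ' ξ ^ 4 = |σ' ξ| ^ 4 := by rw [Even.pow_abs (by decide)]
        rw [e1, e2]
        have h4 : |ψ ξ| ^ 4 ≤ (|σ' ξ| + η) ^ 4 := by gcongr
        have h5 := add_pow_le (abs_nonneg (σ' ξ)) hη0.le 4
        norm_num at h5
        norm_num at h4
        linarith
      rw [div_le_iff₀ hP, add_mul, mul_assoc, div_mul_cancel₀ _ hP.ne']
      exact h3
    · have : ψ ξ = 0 := by
        apply hψ0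
        rw [Set.mem_Icc, not_and_or, not_le, not_le] at hx
        rcases hx with hx | hx
        · left; linarith
        · right; linarith
      rw [this]
      have : 0 ≤ σ' ξ ^ 4 / Φ' ξ := by positivity
      norm_num; linarith
  · intro ξ hξ
    by_cases h : ξ ≤ a - ε
    · rw [zero 0 ξ hξ.1 (Or.inl h)]; simpa using ha0.le
    · push Not at h
      rw [← intervalIntegral.integral_add_adjacent_intervals (hi 0 (a-ε)) (hi (a-ε) ξ),
        zero 0 (a-ε) (by linarith) (Or.inl le_rfl), zero_add]
      exact short _ _ (by linarith) h.le (by linarith [hξ.2]) (by linarith [hξ.2])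
  · intro ξ hξ
    have hsub : Set.uIcc a ξ ⊆ Set.Icc a N := by
      rw [Set.uIcc_of_le hξ.1]; exact Set.Icc_subset_Icc_right hξ.2
    have hsub' : Set.uIcc a ξ ⊆ Set.Ioi 0 := fun x hx => lt_of_lt_of_le ha0 (hsub hx).1
    have hi' : IntervalIntegrable σ' volume a ξ := (hσ'cont.mono hsub').intervalIntegrable
    rw [← intervalIntegral.integral_eq_sub_of_hasDerivAt (fun x hx => hσdiff x (hsub' hx)) hi',
      ← intervalIntegral.integral_sub (hi a ξ) hi']
    have := intervalIntegral.norm_integral_le_of_norm_le_const (a := a) (b := ξ) (C := η)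
      (f := fun x => ψ x - σ' x)
      (fun x hx => hψ1 x (hsub (Set.uIoc_subset_uIcc hx)))
    rw [Real.norm_eq_abs, abs_of_nonneg (by linarith [hξ.1] : 0 ≤ ξ - a)] at this
    have h2 := hξ.2
    nlinarith
  · intro ξ hξ
    by_cases h : ξ ≤ N + ε
    · exact short _ _ (by linarith) hξ (by linarith) (by linarith)
    · push Not at h
      rw [← intervalIntegral.integral_add_adjacent_intervals (hi N (N+ε)) (hi (N+ε) ξ),
        zero (N+ε) ξ h.le (Or.inr le_rfl), add_zero]
      exact short _ _ (by linarith) (by linarith) (by linarith) (by linarith)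

/-- Approximation of the noise coefficient `σ` in `C¹_loc((0,∞))` by smooth
functions `σ_n` with smooth, compactly supported (extensions of) derivatives, satisfying the
growth bounds `σ_n²(ξ) ≤ c'(1 + ξ + Φ(ξ))` and `(σ_n'(ξ))⁴/Φ'(ξ) ≤ c'_δ (1 + ξ + Φ(ξ))`
uniformly in `n`. -/
theorem sigma_smooth_approximation
    (Φ σ : ℝ → ℝ)
    (hΦcont : ContinuousOn Φ (Set.Ici 0))
    (hΦdiff : ∀ ξ > (0:ℝ), DifferentiableAt ℝ Φ ξ)
    (hΦ'cont : ContinuousOn (deriv Φ) (Set.Ioi 0))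
    (hΦmono : StrictMonoOn Φ (Set.Ici 0)) (hΦ0 : Φ 0 = 0)
    (hΦ'pos : ∀ ξ > (0:ℝ), 0 < deriv Φ ξ)
    (hσcont : ContinuousOn σ (Set.Ici 0))
    (hσdiff : ∀ ξ > (0:ℝ), DifferentiableAt ℝ σ ξ)
    (hσ'cont : ContinuousOn (deriv σ) (Set.Ioi 0))
    (hσ0 : σ 0 = 0)
    (c : ℝ) (hc : 0 < c)
    (hσgrow : ∀ ξ ≥ (0:ℝ), σ ξ ^ 2 ≤ c * (1 + ξ + Φ ξ))
    (cδ : ℝ → ℝ)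
    (hcδpos : ∀ δ ∈ Set.Ioo (0:ℝ) 1, 0 < cδ δ)
    (hσ'grow : ∀ δ ∈ Set.Ioo (0:ℝ) 1, ∀ ξ > δ,
      (deriv σ ξ) ^ 4 / deriv Φ ξ ≤ cδ δ * (1 + ξ + Φ ξ)) :
    ∃ σn : ℕ → ℝ → ℝ,
      -- each `σ_n` is continuous on `[0,∞)`, smooth on `(0,∞)`, and vanishes at `0`
      (∀ n, ContinuousOn (σn n) (Set.Ici 0) ∧ ContDiffOn ℝ (⊤ : ℕ∞) (σn n) (Set.Ioi 0) ∧
        σn n 0 = 0) ∧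
      -- the derivative of `σ_n` extends to a smooth compactly supported function on `[0,∞)`
      (∀ n, ∃ ψ : ℝ → ℝ, ContDiff ℝ (⊤ : ℕ∞) ψ ∧ HasCompactSupport ψ ∧
        ∀ ξ > (0:ℝ), deriv (σn n) ξ = ψ ξ) ∧
      -- convergence `σ_n → σ` in `C¹_loc((0,∞))`
      (∀ K : Set ℝ, IsCompact K → K ⊆ Set.Ioi 0 →
        TendstoUniformlyOn (fun n => σn n) σ atTop K ∧
        TendstoUniformlyOn (fun n => deriv (σn n)) (deriv σ) atTop K) ∧
      -- uniform-in-`n` growth bound for `σ_n²`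
      (∃ c' : ℝ, 0 < c' ∧ ∀ n, ∀ ξ ≥ (0:ℝ), σn n ξ ^ 2 ≤ c' * (1 + ξ + Φ ξ)) ∧
      -- uniform-in-`n` growth bound for `(σ_n')⁴/Φ'`
      (∀ δ ∈ Set.Ioo (0:ℝ) 1, ∃ c'δ : ℝ, 0 < c'δ ∧ ∀ n, ∀ ξ > δ,
        (deriv (σn n) ξ) ^ 4 / deriv Φ ξ ≤ c'δ * (1 + ξ + Φ ξ)) := by
  have hσd : ∀ ξ > (0:ℝ), HasDerivAt σ (deriv σ ξ) ξ := fun ξ h => (hσdiff ξ h).hasDerivAt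
  have hN2 : ∀ n : ℕ, (2:ℝ) ≤ (n:ℝ) + 2 := fun n => by
    have : (0:ℝ) ≤ n := Nat.cast_nonneg n
    linarith
  choose ψ hs hcs h1 h2 h3 h4 h5 using fun n : ℕ =>
    key (deriv Φ) σ (deriv σ) hΦ'cont hΦ'pos hσd hσ'cont ((n:ℝ)+2) (1/((n:ℝ)+2)) (hN2 n) rfl
  set a : ℕ → ℝ := fun n => 1/((n:ℝ)+2) with ha
  have ha0 : ∀ n, 0 < a n := fun n => by have := hN2 n; simp only [ha]; positivity
  have ha1 : ∀ n, a n ≤ 1/2 := fun n => one_div_le_one_div_of_le (by norm_num) (hN2 n)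
  have hNt : Tendsto (fun n : ℕ => (n:ℝ) + 2) atTop atTop :=
    tendsto_atTop_add_const_right _ _ tendsto_natCast_atTop_atTop
  have hat : Tendsto a atTop (𝓝 0) := by
    simp only [ha, one_div]; exact tendsto_inv_atTop_zero.comp hNt
  have hσat : Tendsto (fun n => σ (a n)) atTop (𝓝 0) := by
    have := hσcont 0 Set.self_mem_Ici
    rw [ContinuousWithinAt, hσ0] at this
    exact this.comp (tendsto_nhdsWithin_iff.2 ⟨hat, Eventually.of_forall fun n => (ha0 n).le⟩)
  have hi : ∀ n (u v : ℝ), IntervalIntegrable (ψ n) volume u v :=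
    fun n u v => (hs n).continuous.intervalIntegrable u v
  have hd : ∀ n ξ, HasDerivAt (fun ξ => ∫ x in (0:ℝ)..ξ, ψ n x) (ψ n ξ) ξ := fun n ξ =>
    intervalIntegral.integral_hasDerivAt_right (hi n 0 ξ)
      (hs n).continuous.stronglyMeasurable.stronglyMeasurableAtFilter (hs n).continuous.continuousAt
  have hderiv : ∀ n, deriv (fun ξ => ∫ x in (0:ℝ)..ξ, ψ n x) = ψ n :=
    fun n => funext fun ξ => (hd n ξ).deriv
  have hCD : ∀ n, ContDiff ℝ (⊤ : ℕ∞) (fun ξ => ∫ x in (0:ℝ)..ξ, ψ n x) := fun n =>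
    contDiff_infty_iff_deriv.2 ⟨fun ξ => (hd n ξ).differentiableAt, by rw [hderiv]; exact hs n⟩
  have hclose : ∀ n, ∀ ξ ∈ Set.Icc (a n) ((n:ℝ)+2),
      |(∫ x in (0:ℝ)..ξ, ψ n x) - σ ξ| ≤ 2 * a n + |σ (a n)| := by
    intro n ξ hξ
    rw [← intervalIntegral.integral_add_adjacent_intervals (hi n 0 (a n)) (hi n (a n) ξ)]
    have e3 := abs_le.1 (h3 n (a n) ⟨(ha0 n).le, le_rfl⟩)
    have e4 := abs_le.1 (h4 n ξ hξ)
    have e5 := abs_le.1 (le_refl |σ (a n)|)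
    rw [abs_le]
    constructor <;> linarith [e3.1, e3.2, e4.1, e4.2, e5.1, e5.2]
  have hΦnn : ∀ ξ ≥ (0:ℝ), 0 ≤ Φ ξ := fun ξ hξ => by
    rw [← hΦ0]; exact hΦmono.monotoneOn Set.self_mem_Ici hξ hξ
  have hΦ1 := hΦnn 1 zero_le_one
  refine ⟨fun n ξ => ∫ x in (0:ℝ)..ξ, ψ n x, fun n => ⟨(hCD n).continuous.continuousOn,
    (hCD n).contDiffOn, by simp⟩, fun n => ⟨ψ n, hs n, hcs n, fun ξ _ => (hd n ξ).deriv⟩, ?_, ?_, ?_⟩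
  · intro K hK hK0
    rcases K.eq_empty_or_nonempty with rfl | hne
    · exact ⟨tendstoUniformlyOn_empty, tendstoUniformlyOn_empty⟩
    obtain ⟨l, hlK, hl⟩ := hK.exists_isLeast hne
    obtain ⟨u, huK, hu⟩ := hK.exists_isGreatest hne
    have hl0 : 0 < l := hK0 hlK
    have hsub : ∀ᶠ n : ℕ in atTop, ∀ x ∈ K, x ∈ Set.Icc (a n) ((n:ℝ)+2) := by
      filter_upwards [hat.eventually (gt_mem_nhds hl0), hNt.eventually_ge_atTop u] with n hn1 hn2 x hx
      exact ⟨hn1.le.trans (hl hx), (hu hx).trans hn2⟩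
    constructor
    · rw [Metric.tendstoUniformlyOn_iff]
      intro ε hε
      have ht : Tendsto (fun n => 2 * a n + |σ (a n)|) atTop (𝓝 0) := by
        simpa using (hat.const_mul 2).add hσat.abs
      filter_upwards [hsub, ht.eventually (gt_mem_nhds hε)] with n hn1 hn2 x hx
      rw [dist_comm, Real.dist_eq]
      exact (hclose n x (hn1 x hx)).trans_lt hn2
    · rw [Metric.tendstoUniformlyOn_iff]
      intro ε hε
      filter_upwards [hsub, hat.eventually (gt_mem_nhds hε)] with n hn1 hn2 x hx
      rw [dist_comm, Real.dist_eq, hderiv]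
      exact (h1 n x (hn1 x hx)).trans_lt hn2
  · refine ⟨3 * (c + c * (2 + Φ 1) + 9), by positivity, fun n ξ hξ => ?_⟩
    have hW : 1 ≤ 1 + ξ + Φ ξ := by linarith [hΦnn ξ hξ]
    have hσa : σ (a n) ^ 2 ≤ c * (2 + Φ 1) := by
      refine (hσgrow _ (ha0 n).le).trans ?_
      have : Φ (a n) ≤ Φ 1 := hΦmono.monotoneOn (ha0 n).le (Set.mem_Ici.2 zero_le_one)
        (by linarith [ha1 n])
      have := ha1 n
      gcongr
      linarith
    have main : ∃ t, 0 ≤ t ∧ t ≤ ξ ∧ |∫ x in (0:ℝ)..ξ, ψ n x| ≤ |σ t| + |σ (a n)| + 3 * a n := by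
      have := ha0 n
      rcases le_total ξ (a n) with h | h
      · refine ⟨0, le_rfl, hξ, (h3 n ξ ⟨hξ, h⟩).trans ?_⟩
        have := abs_nonneg (σ 0)
        have := abs_nonneg (σ (a n))
        linarith
      rcases le_total ξ ((n:ℝ)+2) with h' | h'
      · refine ⟨ξ, hξ, le_rfl, ?_⟩
        have e := hclose n ξ ⟨h, h'⟩
        have e2 := abs_sub_abs_le_abs_sub (∫ x in (0:ℝ)..ξ, ψ n x) (σ ξ)
        linarith
      · have h2 := hN2 n
        refine ⟨(n:ℝ)+2, by linarith, h', ?_⟩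
        have e := hclose n ((n:ℝ)+2) ⟨by linarith [ha1 n], le_rfl⟩
        have e2 := abs_sub_abs_le_abs_sub (∫ x in (0:ℝ)..((n:ℝ)+2), ψ n x) (σ ((n:ℝ)+2))
        have e3 := h5 n ξ h'
        have e4 := abs_add_le (∫ x in (0:ℝ)..((n:ℝ)+2), ψ n x) (∫ x in ((n:ℝ)+2)..ξ, ψ n x)
        rw [intervalIntegral.integral_add_adjacent_intervals (hi _ _ _) (hi _ _ _)] at e4
        linarith
    obtain ⟨t, ht0, htξ, ht⟩ := main
    have hσt : σ t ^ 2 ≤ c * (1 + ξ + Φ ξ) := by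
      refine (hσgrow t ht0).trans ?_
      have : Φ t ≤ Φ ξ := hΦmono.monotoneOn ht0 hξ htξ
      gcongr
    have ha3 : 3 * a n ≤ 3 := by linarith [ha1 n]
    have hq : |∫ x in (0:ℝ)..ξ, ψ n x| ^ 2 ≤ (|σ t| + |σ (a n)| + 3) ^ 2 := by
      gcongr; linarith
    rw [sq_abs] at hq
    have hq2 : (|σ t| + |σ (a n)| + 3) ^ 2 ≤ 3 * (σ t ^ 2 + σ (a n) ^ 2 + 9) := by
      rw [← sq_abs (σ t), ← sq_abs (σ (a n))]
      nlinarith [sq_nonneg (|σ t| - |σ (a n)|), sq_nonneg (|σ t| - 3), sq_nonneg (|σ (a n)| - 3)]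
    have hD : 0 ≤ c * (2 + Φ 1) := by positivity
    change (∫ x in (0:ℝ)..ξ, ψ n x) ^ 2 ≤ _
    nlinarith
  · intro δ hδ
    refine ⟨8 * cδ δ + 8, by linarith [hcδpos δ hδ], fun n ξ hξ => ?_⟩
    have hξ0 : 0 < ξ := hδ.1.trans hξ
    rw [hderiv]
    have e1 := h2 n ξ hξ0
    have e2 := hσ'grow δ hδ ξ hξ
    have := hΦnn ξ hξ0.le
    nlinarith
end

section
/- Let U ⊂ ℝ^d be a bounded open set and T > 0. For each δ ∈ (0,1) let φ̃_δ : [0,∞) → [0,1] be a smooth nondecreasing function with φ̃_δ(ξ) = 0 for ξ ≤ δ/2 and φ̃_δ(ξ) = 1 for ξ ≥ δ, and define Ψ_δ : ℝ → ℝ by Ψ_δ(ξ) = φ̃_δ(|ξ|) ξ. Define D : L¹([0,T]; L¹(U)) × L¹([0,T]; L¹(U)) → [0,∞) by D(f, g) = Σ_{k=1}^∞ 2^{-k} ‖Ψ_{1/k}∘f − Ψ_{1/k}∘g‖_{L¹([0,T];L¹(U))} / (1 + ‖Ψ_{1/k}∘f − Ψ_{1/k}∘g‖_{L¹([0,T];L¹(U))}).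 Then D is a metric on L¹([0,T]; L¹(U)) (identifying functions equal almost everywhere), and the topology it defines coincides with the strong norm topology: for f_n, f ∈ L¹([0,T]; L¹(U)) one has D(f_n, f) → 0 if and only if ‖f_n − f‖_{L¹([0,T];L¹(U))} → 0. -/
open MeasureTheory Filter Topology

lemma cutoff_op {α E : Type*} [MeasurableSpace α] [NormedAddCommGroup E] (μ : Measure α)
    [IsFiniteMeasure μ] (ψ : E → E) (C : NNReal) (hψ : LipschitzWith C ψ) (h0 : ψ 0 = 0)
    (c : ℝ) (hc : 0 ≤ c) (hψc : ∀ x, ‖ψ x - x‖ ≤ c) :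
    ∃ F : Lp E 1 μ → Lp E 1 μ, LipschitzWith C F ∧ F 0 = 0 ∧
      (∀ f, ‖F f - f‖ ≤ (measureUnivNNReal μ : ℝ) * c) ∧
      ∀ f g, ‖F f - F g‖ = ∫ t, ‖ψ (f t) - ψ (g t)‖ ∂μ := by
  have hF : LipschitzWith C (hψ.compLp h0 : Lp E 1 μ → Lp E 1 μ) := by
    refine LipschitzWith.of_dist_le_mul fun f g => ?_
    rw [dist_eq_norm, dist_eq_norm]
    exact hψ.norm_compLp_sub_le h0 f g
  refine ⟨hψ.compLp h0, hF, ?_, ?_, ?_⟩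
  · exact hψ.compLp_zero h0
  · intro f
    have := Lp.norm_le_of_ae_bound (p := 1) (μ := μ) (f := hψ.compLp h0 f - f) hc (by
      filter_upwards [Lp.coeFn_sub (hψ.compLp h0 f) f, hψ.coeFn_compLp h0 f] with t h1 h2
      rw [h1, Pi.sub_apply, h2]
      exact hψc _)
    simpa using this
  · intro f g
    rw [L1.norm_eq_integral_norm]
    refine integral_congr_ae ?_
    filter_upwards [Lp.coeFn_sub (hψ.compLp h0 f) (hψ.compLp h0 g), hψ.coeFn_compLp h0 f,
      hψ.coeFn_compLp h0 g] with t h1 h2 h3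
    rw [h1, Pi.sub_apply, h2, h3]
    rfl

lemma cutoff_scalar (φ : ℝ → ℝ) (δ : ℝ) (hδ : 0 < δ) (hs : ContDiff ℝ (⊤ : ℕ∞) φ)
    (hr : ∀ ξ ≥ (0:ℝ), φ ξ ∈ Set.Icc (0:ℝ) 1) (h1 : ∀ ξ : ℝ, δ ≤ ξ → φ ξ = 1) :
    (∃ C : NNReal, LipschitzWith C (fun ξ => φ |ξ| * ξ)) ∧
      ∀ ξ : ℝ, ‖φ |ξ| * ξ - ξ‖ ≤ δ := by
  constructor
  · obtain ⟨K, hK⟩ := (hs.contDiffOn (s := Set.Icc 0 δ)).exists_lipschitzOnWith (by simp)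
      (convex_Icc 0 δ) isCompact_Icc
    have hmin : ∀ ξ : ℝ, φ |ξ| = φ (min |ξ| δ) := by
      intro ξ
      rcases le_total |ξ| δ with h | h
      · rw [min_eq_left h]
      · rw [min_eq_right h, h1 _ h, h1 _ le_rfl]
    have hL : ∀ ξ η : ℝ, |φ |ξ| - φ (|η|)| ≤ K * |ξ - η| := by
      intro ξ η
      have := hK.dist_le_mul (min |ξ| δ) ⟨le_min (abs_nonneg _) hδ.le, min_le_right _ _⟩
        (min |η| δ) ⟨le_min (abs_nonneg _) hδ.le, min_le_right _ _⟩
      rw [← hmin, ← hmin, Real.dist_eq, Real.dist_eq] at this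
      refine this.trans (mul_le_mul_of_nonneg_left ?_ K.2)
      refine (abs_min_sub_min_le_max _ _ _ _).trans ?_
      simp [abs_abs_sub_abs_le]
    have key : ∀ ξ η : ℝ, |η| ≤ δ → |φ |ξ| * ξ - φ |η| * η| ≤ (1 + K * δ) * |ξ - η| := by
      intro ξ η h
      have e : φ |ξ| * ξ - φ |η| * η = φ |ξ| * (ξ - η) + (φ |ξ| - φ |η|) * η := by ring
      rw [e]
      refine (abs_add_le _ _).trans ?_
      rw [abs_mul, abs_mul]
      have ha := hr |ξ| (abs_nonneg _)
      rw [abs_of_nonneg ha.1]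
      have h2 : φ |ξ| * |ξ - η| ≤ 1 * |ξ - η| :=
        mul_le_mul_of_nonneg_right ha.2 (abs_nonneg _)
      have h3 : |φ |ξ| - φ (|η|)| * |η| ≤ (K * |ξ - η|) * δ :=
        mul_le_mul (hL ξ η) h (abs_nonneg _) (mul_nonneg K.2 (abs_nonneg _))
      linarith
    refine ⟨1 + K * ⟨δ, hδ.le⟩, LipschitzWith.of_dist_le_mul fun ξ η => ?_⟩
    rw [Real.dist_eq, Real.dist_eq]
    change _ ≤ (1 + K * δ) * |ξ - η|
    rcases le_total |η| δ with h | h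
    · exact key ξ η h
    rcases le_total |ξ| δ with h' | h'
    · rw [abs_sub_comm, abs_sub_comm ξ]
      exact key η ξ h'
    · simp only [h1 _ h, h1 _ h', one_mul]
      have := mul_nonneg (mul_nonneg K.2 hδ.le) (abs_nonneg (ξ - η))
      have e : (K : ℝ) = K.1 := rfl
      rw [e]
      linarith
  · intro ξ
    rw [Real.norm_eq_abs]
    rcases le_total |ξ| δ with h | h
    · have e : φ |ξ| * ξ - ξ = -((1 - φ |ξ|) * ξ) := by ring
      have ha := hr |ξ| (abs_nonneg _)
      rw [e, abs_neg, abs_mul, abs_of_nonneg (by linarith [ha.2])]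
      nlinarith [ha.1, ha.2, abs_nonneg ξ]
    · rw [h1 _ h]; simp [hδ.le]

lemma cutoff_q_mono {a b : ℝ} (ha : 0 ≤ a) (h : a ≤ b) : a / (1 + a) ≤ b / (1 + b) := by
  rw [div_le_div_iff₀ (by linarith) (by linarith)]; nlinarith

lemma cutoff_q_add {a b : ℝ} (ha : 0 ≤ a) (hb : 0 ≤ b) :
    (a + b) / (1 + (a + b)) ≤ a / (1 + a) + b / (1 + b) := by
  rw [add_div]
  exact add_le_add (div_le_div_of_nonneg_left ha (by linarith) (by linarith))
    (div_le_div_of_nonneg_left hb (by linarith) (by linarith))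

lemma cutoff_abstract {E : Type*} [NormedAddCommGroup E] (F : ℕ → E → E)
    (hF : ∀ k, ∃ C : NNReal, LipschitzWith C (F k)) (M : ℝ)
    (hM : ∀ k f, ‖F k f - f‖ ≤ M * ((k:ℝ) + 1)⁻¹)
    (D : E → E → ℝ)
    (hD : ∀ f g, D f g = ∑' k : ℕ,
      (2:ℝ)⁻¹ ^ (k + 1) * (‖F k f - F k g‖ / (1 + ‖F k f - F k g‖))) :
    (∀ f g, D f g = 0 ↔ f = g) ∧
    (∀ f g, D f g = D g f) ∧
    (∀ f g h, D f h ≤ D f g + D g h) ∧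
    (∀ (fs : ℕ → E) (f : E),
      Tendsto (fun n => D (fs n) f) atTop (𝓝 0) ↔
        Tendsto (fun n => ‖fs n - f‖) atTop (𝓝 0)) := by
  have hsumg : Summable (fun k : ℕ => (2:ℝ)⁻¹ ^ (k + 1)) :=
    (summable_nat_add_iff 1).2 (summable_geometric_of_lt_one (by norm_num) (by norm_num))
  have hnn : ∀ k f g, 0 ≤ (2:ℝ)⁻¹ ^ (k + 1) * (‖F k f - F k g‖ / (1 + ‖F k f - F k g‖)) :=
    fun k f g => by positivity
  have hle : ∀ k f g, (2:ℝ)⁻¹ ^ (k + 1) * (‖F k f - F k g‖ / (1 + ‖F k f - F k g‖))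
      ≤ (2:ℝ)⁻¹ ^ (k + 1) := fun k f g => by
    refine mul_le_of_le_one_right (by positivity) ?_
    rw [div_le_one (by positivity)]
    linarith
  have hsum : ∀ f g, Summable fun k : ℕ =>
      (2:ℝ)⁻¹ ^ (k + 1) * (‖F k f - F k g‖ / (1 + ‖F k f - F k g‖)) :=
    fun f g => Summable.of_nonneg_of_le (fun k => hnn k f g) (fun k => hle k f g) hsumg
  have hdist : ∀ (k : ℕ) f g, ‖f - g‖ ≤ 2 * M * ((k:ℝ) + 1)⁻¹ + ‖F k f - F k g‖ := by
    intro k f g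
    have e : f - g = (F k f - F k g) - (F k f - f) + (F k g - g) := by abel
    have h1 : ‖f - g‖ ≤ ‖F k f - F k g‖ + ‖F k f - f‖ + ‖F k g - g‖ := by
      rw [e]
      refine (norm_add_le _ _).trans (add_le_add ((norm_sub_le _ _).trans ?_) ?_) <;> simp
    linarith [hM k f, hM k g]
  have hlim : Tendsto (fun k : ℕ => 2 * M * ((k:ℝ) + 1)⁻¹) atTop (𝓝 0) := by
    have := (tendsto_one_div_add_atTop_nhds_zero_nat (𝕜 := ℝ)).const_mul (2 * M)
    simpa using this
  refine ⟨fun f g => ⟨fun h => ?_, fun h => ?_⟩, fun f g => ?_, fun f g h => ?_,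
    fun fs f => ⟨fun h => ?_, fun h => ?_⟩⟩
  · rw [hD] at h
    have h0 := (hasSum_zero_iff_of_nonneg (fun k => hnn k f g)).1 (h ▸ (hsum f g).hasSum)
    have h1 : ∀ k, ‖F k f - F k g‖ = 0 := by
      intro k
      have := congrFun h0 k
      simp only [Pi.zero_apply, mul_eq_zero, div_eq_zero_iff] at this
      rcases this with h | h | h
      · exact absurd h (by positivity)
      · exact h
      · exact absurd h (by positivity)
    have h2 : ‖f - g‖ ≤ 0 := ge_of_tendsto' hlim fun k => by
      have := hdist k f g
      rwa [h1 k, add_zero] at this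
    exact sub_eq_zero.1 (norm_le_zero_iff.1 h2)
  · subst h; rw [hD]; simp
  · rw [hD, hD]; simp only [norm_sub_rev]
  · rw [hD, hD, hD, ← (hsum f g).tsum_add (hsum g h)]
    refine (hsum f h).tsum_le_tsum (fun k => ?_) ((hsum f g).add (hsum g h))
    rw [← mul_add]
    refine mul_le_mul_of_nonneg_left ?_ (by positivity)
    exact (cutoff_q_mono (norm_nonneg _) (norm_sub_le_norm_sub_add_norm_sub _ (F k g) _)).trans
      (cutoff_q_add (norm_nonneg _) (norm_nonneg _))
  · have hk : ∀ k, Tendsto (fun n => ‖F k (fs n) - F k f‖) atTop (𝓝 0) := by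
      intro k
      have h1 : Tendsto (fun n => (2:ℝ) ^ (k + 1) * D (fs n) f) atTop (𝓝 0) := by
        simpa using h.const_mul ((2:ℝ) ^ (k + 1))
      have h2 : Tendsto (fun n => ‖F k (fs n) - F k f‖ / (1 + ‖F k (fs n) - F k f‖))
          atTop (𝓝 0) := by
        refine squeeze_zero (fun n => by positivity) (fun n => ?_) h1
        have := (hsum (fs n) f).le_tsum k (fun j _ => hnn j _ _)
        rw [← hD] at this
        have h3 := mul_le_mul_of_nonneg_left this (by positivity : (0:ℝ) ≤ 2 ^ (k + 1))
        rwa [← mul_assoc, ← mul_pow, mul_inv_cancel₀ two_ne_zero, one_pow, one_mul] at h3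
      have h4 : Tendsto (fun n => (‖F k (fs n) - F k f‖ / (1 + ‖F k (fs n) - F k f‖)) /
          (1 - ‖F k (fs n) - F k f‖ / (1 + ‖F k (fs n) - F k f‖))) atTop (𝓝 (0 / (1 - 0))) :=
        h2.div (tendsto_const_nhds.sub h2) (by norm_num)
      rw [zero_div] at h4
      refine h4.congr fun n => ?_
      have : 1 + ‖F k (fs n) - F k f‖ ≠ 0 := by positivity
      field_simp
      simp
    rw [Metric.tendsto_atTop]
    intro ε hε
    obtain ⟨k, hk1⟩ := (hlim.eventually_lt_const (half_pos hε)).exists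
    obtain ⟨N, hN⟩ := eventually_atTop.1 ((hk k).eventually_lt_const (half_pos hε))
    refine ⟨N, fun n hn => ?_⟩
    rw [Real.dist_eq, sub_zero, abs_of_nonneg (norm_nonneg _)]
    linarith [hdist k (fs n) f, hN n hn]
  · simp only [hD]
    have h5 := tendsto_tsum_of_dominated_convergence (𝓕 := atTop)
      (f := fun n k => (2:ℝ)⁻¹ ^ (k + 1) *
        (‖F k (fs n) - F k f‖ / (1 + ‖F k (fs n) - F k f‖))) (g := fun _ => (0:ℝ)) hsumg ?_ ?_
    · simpa using h5
    · intro k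
      obtain ⟨C, hC⟩ := hF k
      have h1 : Tendsto (fun n => ‖F k (fs n) - F k f‖) atTop (𝓝 0) := by
        refine squeeze_zero (fun n => norm_nonneg _) (fun n => hC.norm_sub_le (fs n) f) ?_
        simpa using h.const_mul (C : ℝ)
      have h2 := (h1.div (tendsto_const_nhds (x := (1:ℝ)).add h1) (by norm_num)).const_mul
        ((2:ℝ)⁻¹ ^ (k + 1))
      simpa using h2
    · refine Eventually.of_forall fun n k => ?_
      rw [Real.norm_of_nonneg (hnn k _ _)]
      exact hle k _ _

lemma cutoff_op2 {α β : Type*} [MeasurableSpace α] [MeasurableSpace β] (μ : Measure α)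
    (ν : Measure β) [IsFiniteMeasure μ] [IsFiniteMeasure ν] (ψ : ℝ → ℝ) (C : NNReal)
    (hψ : LipschitzWith C ψ) (h0 : ψ 0 = 0)
    (c : ℝ) (hc : 0 ≤ c) (hψc : ∀ x, ‖ψ x - x‖ ≤ c) :
    ∃ F : Lp (Lp ℝ 1 ν) 1 μ → Lp (Lp ℝ 1 ν) 1 μ, (∃ C : NNReal, LipschitzWith C F) ∧
      (∀ f, ‖F f - f‖ ≤ ((measureUnivNNReal μ : ℝ) * (measureUnivNNReal ν : ℝ)) * c) ∧
      ∀ f g, ‖F f - F g‖ = ∫ t, ∫ x, |ψ (f t x) - ψ (g t x)| ∂ν ∂μ := by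
  obtain ⟨G, hG1, hG2, hG3, hG4⟩ := cutoff_op ν ψ C hψ h0 c hc hψc
  obtain ⟨H, hH1, hH2, hH3, hH4⟩ := cutoff_op μ G C hG1 hG2 _ (by positivity) hG3
  refine ⟨H, ⟨C, hH1⟩, fun f => ?_, fun f g => ?_⟩
  · rw [mul_assoc]; exact hH3 f
  · rw [hH4]
    refine integral_congr_ae (Eventually.of_forall fun t => ?_)
    exact hG4 (f t) (g t)

set_option maxHeartbeats 2000000 in
/-- The function
`D(f,g) = Σ_k 2^{-k} ‖Ψ_{1/k}∘f - Ψ_{1/k}∘g‖_{L¹_tL¹_x} / (1 + ‖Ψ_{1/k}∘f - Ψ_{1/k}∘g‖_{L¹_tL¹_x})`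
is a metric on `L¹([0,T]; L¹(U))` whose topology coincides with the strong norm topology. -/
theorem cutoff_metric_on_L1L1
    (d : ℕ) (U : Set (EuclideanSpace ℝ (Fin d)))
    (hUopen : IsOpen U) (hUbdd : Bornology.IsBounded U)
    (T : ℝ) (hT : 0 < T)
    -- the family of smooth cutoffs `φ̃_δ`
    (φt : ℝ → ℝ → ℝ)
    (hsmooth : ∀ δ ∈ Set.Ioc (0:ℝ) 1, ContDiff ℝ (⊤ : ℕ∞) (φt δ))
    (hmono : ∀ δ ∈ Set.Ioc (0:ℝ) 1, MonotoneOn (φt δ) (Set.Ici 0))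
    (hrange : ∀ δ ∈ Set.Ioc (0:ℝ) 1, ∀ ξ ≥ (0:ℝ), φt δ ξ ∈ Set.Icc (0:ℝ) 1)
    (hzero : ∀ δ ∈ Set.Ioc (0:ℝ) 1, ∀ ξ ≥ (0:ℝ), ξ ≤ δ / 2 → φt δ ξ = 0)
    (hone : ∀ δ ∈ Set.Ioc (0:ℝ) 1, ∀ ξ : ℝ, δ ≤ ξ → φt δ ξ = 1)
    -- `Ψ_δ(ξ) = φ̃_δ(|ξ|) ξ`
    (Ψ : ℝ → ℝ → ℝ) (hΨ : ∀ δ ξ, Ψ δ ξ = φt δ |ξ| * ξ)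
    -- `D` on the Bochner space `L¹([0,T]; L¹(U))`
    (D : Lp (Lp ℝ 1 (volume.restrict U)) 1 (volume.restrict (Set.Icc (0:ℝ) T)) →
      Lp (Lp ℝ 1 (volume.restrict U)) 1 (volume.restrict (Set.Icc (0:ℝ) T)) → ℝ)
    (hD : ∀ f g, D f g = ∑' k : ℕ,
      (2:ℝ)⁻¹ ^ (k + 1) *
        ((∫ t in Set.Icc (0:ℝ) T, ∫ x in U,
            |Ψ ((k:ℝ) + 1)⁻¹ (f t x) - Ψ ((k:ℝ) + 1)⁻¹ (g t x)|) /
         (1 + ∫ t in Set.Icc (0:ℝ) T, ∫ x in U,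
            |Ψ ((k:ℝ) + 1)⁻¹ (f t x) - Ψ ((k:ℝ) + 1)⁻¹ (g t x)|))) :
    -- `D` is a metric
    (∀ f g, D f g = 0 ↔ f = g) ∧
    (∀ f g, D f g = D g f) ∧
    (∀ f g h, D f h ≤ D f g + D g h) ∧
    -- the topology of `D` coincides with the strong norm topology
    (∀ (fs : ℕ → Lp (Lp ℝ 1 (volume.restrict U)) 1 (volume.restrict (Set.Icc (0:ℝ) T)))
      (f : Lp (Lp ℝ 1 (volume.restrict U)) 1 (volume.restrict (Set.Icc (0:ℝ) T))),
      Tendsto (fun n => D (fs n) f) atTop (𝓝 0) ↔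
        Tendsto (fun n => ‖fs n - f‖) atTop (𝓝 0)) := by
  have : IsFiniteMeasure (volume.restrict U) :=
    isFiniteMeasure_restrict.2 hUbdd.measure_lt_top.ne
  have hop : ∀ k : ℕ, ∃ F : Lp (Lp ℝ 1 (volume.restrict U)) 1 (volume.restrict (Set.Icc (0:ℝ) T)) →
      Lp (Lp ℝ 1 (volume.restrict U)) 1 (volume.restrict (Set.Icc (0:ℝ) T)),
      (∃ C : NNReal, LipschitzWith C F) ∧
      (∀ f, ‖F f - f‖ ≤ ((measureUnivNNReal (volume.restrict (Set.Icc (0:ℝ) T)) : ℝ) *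
        (measureUnivNNReal (volume.restrict U) : ℝ)) * ((k:ℝ) + 1)⁻¹) ∧
      ∀ f g, ‖F f - F g‖ = ∫ t in Set.Icc (0:ℝ) T, ∫ x in U,
            |Ψ ((k:ℝ) + 1)⁻¹ (f t x) - Ψ ((k:ℝ) + 1)⁻¹ (g t x)| := by
    intro k
    have hδ0 : (0:ℝ) < ((k:ℝ) + 1)⁻¹ := by positivity
    have hδ : ((k:ℝ) + 1)⁻¹ ∈ Set.Ioc (0:ℝ) 1 :=
      ⟨hδ0, inv_le_one_of_one_le₀ (by linarith [Nat.cast_nonneg (α := ℝ) k])⟩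
    obtain ⟨⟨C, hC⟩, hb⟩ := cutoff_scalar _ _ hδ0 (hsmooth _ hδ) (hrange _ hδ) (hone _ hδ)
    have e : (fun ξ => φt ((k:ℝ) + 1)⁻¹ |ξ| * ξ) = Ψ ((k:ℝ) + 1)⁻¹ := by
      funext ξ; rw [hΨ]
    rw [e] at hC
    exact cutoff_op2 (volume.restrict (Set.Icc (0:ℝ) T)) (volume.restrict U) _ C hC
      (by rw [hΨ]; simp) _ hδ0.le (fun ξ => by rw [hΨ]; exact hb ξ)
  choose F hF1 hF2 hF3 using hop
  refine cutoff_abstract F hF1 _ hF2 D fun f g => ?_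
  rw [hD]
  simp only [hF3]
end

section
/- Let (Ω, ℱ, ℙ) be a probability space and X̄ a complete separable metric space. A sequence (X_n) of X̄-valued random variables converges in probability (to some X̄-valued random variable) as n → ∞ if and only if the following holds: for every pair of sequences of indices (n_k, m_k)_{k=1}^∞ with n_k → ∞ and m_k → ∞ as k → ∞, there is a further subsequence (n_{k'}, m_{k'})_{k'=1}^∞ such that the joint laws of the pairs (X_{n_{k'}}, X_{m_{k'}}) converge weakly, as k' → ∞, to a probability measure μ on X̄ × X̄ satisfying μ({(x, y) ∈ X̄ × X̄ : x = y}) = 1. -/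
open MeasureTheory Filter Topology

/-- Gyöngy–Krylov.  A sequence of random variables with values in a complete
separable metric space converges in probability if and only if every pair of diverging index
sequences admits a subsequence along which the joint laws converge weakly to a probability
measure concentrated on the diagonal. -/
theorem convergence_in_probability_iff_joint_laws
    (Ω : Type*) [MeasurableSpace Ω] (ℙ : Measure Ω) [IsProbabilityMeasure ℙ]
    (Xb : Type*) [MetricSpace Xb] [CompleteSpace Xb] [TopologicalSpace.SeparableSpace Xb]
    [MeasurableSpace Xb] [BorelSpace Xb]
    (X : ℕ → Ω → Xb) (hX : ∀ n, Measurable (X n)) :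
    (∃ Y : Ω → Xb, Measurable Y ∧ TendstoInMeasure ℙ X atTop Y) ↔
    (∀ n m : ℕ → ℕ, Tendsto n atTop atTop → Tendsto m atTop atTop →
      ∃ φ : ℕ → ℕ, StrictMono φ ∧
        ∃ μ : Measure (Xb × Xb), IsProbabilityMeasure μ ∧
          μ {p : Xb × Xb | p.1 = p.2} = 1 ∧
          ∀ F : BoundedContinuousFunction (Xb × Xb) ℝ,
            Tendsto (fun k => ∫ ω, F (X (n (φ k)) ω, X (m (φ k)) ω) ∂ℙ) atTop
              (𝓝 (∫ p, F p ∂μ))) := by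
  constructor
  · rintro ⟨Y, hY, hXY⟩ n m hn hm
    obtain ⟨a, ha, ha'⟩ := (hXY.comp hn).exists_seq_tendsto_ae
    obtain ⟨b, hb, hb'⟩ := (hXY.comp (hm.comp ha.tendsto_atTop)).exists_seq_tendsto_ae
    have hYY : Measurable (fun ω => (Y ω, Y ω)) := hY.prodMk hY
    refine ⟨a ∘ b, ha.comp hb, ℙ.map (fun ω => (Y ω, Y ω)),
      Measure.isProbabilityMeasure_map hYY.aemeasurable, ?_, ?_⟩
    · rw [Measure.map_apply hYY (measurableSet_eq_fun measurable_fst measurable_snd)]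
      simp
    · intro F
      rw [integral_map hYY.aemeasurable F.continuous.aestronglyMeasurable]
      refine tendsto_integral_of_dominated_convergence (fun _ => ‖F‖) ?_ ?_ ?_ ?_
      · intro k
        exact (F.continuous.measurable.comp ((hX _).prodMk (hX _))).aestronglyMeasurable
      · exact integrable_const _
      · intro k
        exact Eventually.of_forall fun ω => F.norm_coe_le_norm _
      · filter_upwards [ha', hb'] with ω h1 h2
        exact (F.continuous.tendsto _).comp
          ((h1.comp hb.tendsto_atTop).prodMk_nhds h2)
  · intro H
    have hP : ∀ ε : ℝ, 0 < ε →
        Tendsto (fun p : ℕ × ℕ => ℙ {ω | ε ≤ dist (X p.1 ω) (X p.2 ω)}) atTop (𝓝 0) := by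
      intro ε hε
      refine tendsto_of_subseq_tendsto fun ns hns => ?_
      rw [← prod_atTop_atTop_eq] at hns
      obtain ⟨φ, hφ, μ, hμ, hd, hF⟩ := H (fun k => (ns k).1) (fun k => (ns k).2)
        (tendsto_fst.comp hns) (tendsto_snd.comp hns)
      refine ⟨φ, ?_⟩
      let F : BoundedContinuousFunction (Xb × Xb) ℝ :=
        BoundedContinuousFunction.ofNormedAddCommGroup
          (fun p => min ε (dist p.1 p.2)) (by fun_prop) ε (by
            intro p
            rw [Real.norm_of_nonneg (le_min hε.le dist_nonneg)]
            exact min_le_left _ _)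
      have hFv : ∀ p, F p = min ε (dist p.1 p.2) := fun p => rfl
      have h0 : ∫ p, F p ∂μ = 0 := by
        have hae : ∀ᵐ p ∂μ, p.1 = p.2 :=
          (prob_compl_eq_zero_iff (measurableSet_eq_fun measurable_fst measurable_snd)).2 hd
        refine integral_eq_zero_of_ae ?_
        filter_upwards [hae] with p hp
        simp [hFv, hp, hε.le]
      have hFF := hF F
      rw [h0] at hFF
      have hreal : Tendsto (fun k => ℙ.real {ω | ε ≤ dist (X (ns (φ k)).1 ω) (X (ns (φ k)).2 ω)})
          atTop (𝓝 0) := by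
        have := hFF.div_const ε
        rw [zero_div] at this
        refine squeeze_zero (fun _ => measureReal_nonneg) (fun k => ?_) this
        rw [le_div_iff₀ hε, mul_comm]
        have hm := mul_meas_ge_le_integral_of_nonneg (μ := ℙ)
          (f := fun ω => F (X (ns (φ k)).1 ω, X (ns (φ k)).2 ω))
          (Eventually.of_forall fun ω => le_min hε.le dist_nonneg)
          (Integrable.of_bound
            (F.continuous.measurable.comp ((hX _).prodMk (hX _))).aestronglyMeasurable ‖F‖
            (Eventually.of_forall fun ω => F.norm_coe_le_norm _)) ε
        simpa [hFv] using hm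
      exact (ENNReal.tendsto_toReal_zero_iff (fun _ => measure_ne_top _ _)).1 hreal
    have hsub : ∃ φ : ℕ → ℕ, StrictMono φ ∧ ∀ k : ℕ, ∀ i ≥ φ k, ∀ j ≥ φ k,
        ℙ {ω | (1 / 2 : ℝ) ^ k ≤ dist (X i ω) (X j ω)} ≤ (2⁻¹ : ENNReal) ^ k := by
      have h1 : ∀ k : ℕ, ∃ N, ∀ M ≥ N, ∀ i ≥ M, ∀ j ≥ M,
          ℙ {ω | (1 / 2 : ℝ) ^ k ≤ dist (X i ω) (X j ω)} ≤ (2⁻¹ : ENNReal) ^ k := by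
        intro k
        have := (hP ((1 / 2 : ℝ) ^ k) (by positivity)).eventually_le_const
          (u := (2⁻¹ : ENNReal) ^ k) (ENNReal.pow_pos (by simp) _)
        obtain ⟨⟨a, b⟩, hab⟩ := eventually_atTop.1 this
        refine ⟨max a b, fun M hM i hi j hj => hab (i, j) ⟨?_, ?_⟩⟩
        · exact (le_max_left a b).trans (hM.trans hi)
        · exact (le_max_right a b).trans (hM.trans hj)
      exact extraction_forall_of_eventually' h1
    obtain ⟨φ, hφ, hφ'⟩ := hsub
    have hlim : ∀ᵐ ω ∂ℙ, ∃ l, Tendsto (fun k => X (φ k) ω) atTop (𝓝 l) := by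
      have hs : ∑' k : ℕ, ℙ {ω | (1 / 2 : ℝ) ^ k ≤ dist (X (φ k) ω) (X (φ (k + 1)) ω)} ≠ ⊤ := by
        refine ne_top_of_le_ne_top ?_
          (ENNReal.tsum_le_tsum fun k => hφ' k _ le_rfl _ (hφ.monotone k.le_succ))
        rw [ENNReal.tsum_geometric]
        simp
      filter_upwards [ae_eventually_notMem hs] with ω hω
      refine cauchySeq_tendsto_of_complete (cauchySeq_of_summable_dist ?_)
      refine Summable.of_norm_bounded_eventually_nat (g := fun k => (1 / 2 : ℝ) ^ k)
        summable_geometric_two ?_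
      filter_upwards [hω] with k hk
      rw [Real.norm_of_nonneg dist_nonneg]
      exact (not_le.1 hk).le
    obtain ⟨Y, hY, hYl⟩ :=
      measurable_limit_of_tendsto_metrizable_ae (fun k => (hX (φ k)).aemeasurable) hlim
    refine ⟨Y, hY, ?_⟩
    have hT : TendstoInMeasure ℙ (fun k => X (φ k)) atTop Y :=
      tendstoInMeasure_of_tendsto_ae (fun k => (hX _).aestronglyMeasurable) hYl
    rw [tendstoInMeasure_iff_dist] at hT ⊢
    intro ε hε
    have h1 := hP (ε / 2) (half_pos hε)
    rw [← prod_atTop_atTop_eq] at h1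
    have h2 := (h1.comp (tendsto_id.prodMk hφ.tendsto_atTop)).add (hT (ε / 2) (half_pos hε))
    rw [add_zero] at h2
    refine tendsto_of_tendsto_of_tendsto_of_le_of_le tendsto_const_nhds h2
      (fun _ => zero_le) (fun k => ?_)
    refine (measure_mono ?_).trans (measure_union_le _ _)
    intro ω hω
    simp only [Set.mem_setOf_eq, Set.mem_union, id] at hω ⊢
    by_contra! hc
    linarith [dist_triangle (X k ω) (X (φ k) ω) (Y ω)]
end
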